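/- (Lecture Hall Theorem) For every n ≥ 1 and every m ≥ 0, the number of lecture hall partitions λ = (λ₁, ..., λₙ) with λ₁ + ... + λₙ = m equals the number of partitions of m into odd parts each at most 2n-1. -/

import Mathlib

/-!
The argument is a reflection bijection in the style of Bousquet-Mélou and Eriksson. In a lecture
hall partition `λ` of length `n`, fix `λₙ, λₙ₋₂, …`; each remaining `λᵢ` then ranges over an
integer interval whose end points depend only on its two neighbours. Reflecting each of these
entries in its interval and appending a part that exceeds its least admissible value by `k` is a
bijection from the pairs `(k, λ)` to the lecture hall partitions of length `n + 1`. The upper end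
of the `i`-th interval and the lower end of the `(i + 2)`-nd add up to `2 λᵢ₊₁`, so the half
weights `u = λₙ + λₙ₋₂ + ⋯` and `v = λₙ₋₁ + λₙ₋₃ + ⋯` become `2 u - v + k` and `u`. An excess `k`
chosen `i` steps before the last one therefore contributes `i + 1` times to `u` and `i` times to
`v`, hence `2 i + 1` times to the weight: it is the multiplicity of the odd part `2 i + 1`.
-/

open Finset

namespace LectureHall

/-! ### Admissible neighbours of an entry -/

/-- The least integer admissible at position `i + 1` when `x` stands at position `i > 0`, that is,
the least `y` with `x / i ≤ y / (i + 1)`; the ceiling of `(i + 1) x / i` is written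
`x + ⌈x / i⌉`. -/
def minNext (i : ℕ) (x : ℤ) : ℤ := x + ⌈(x : ℚ) / i⌉

/-- The greatest integer admissible at position `i - 1` when `x` stands at position `i`; the floor
of `(i - 1) x / i` is written `x - ⌈x / i⌉`. -/
def maxPrev (i : ℕ) (x : ℤ) : ℤ := x - ⌈(x : ℚ) / i⌉

lemma minNext_zero_right (i : ℕ) : minNext i 0 = 0 := by simp [minNext]

lemma minNext_one_left (x : ℤ) : minNext 1 x = 2 * x := by simp [minNext, two_mul]

lemma maxPrev_add_minNext (i : ℕ) (x : ℤ) : maxPrev i x + minNext i x = 2 * x := by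
  simp only [maxPrev, minNext]
  ring

lemma minNext_le_iff {i : ℕ} (hi : 0 < i) {x y : ℤ} :
    minNext i x ≤ y ↔ (x : ℚ) / i ≤ y / (i + 1 : ℕ) := by
  rw [minNext, ← le_sub_iff_add_le', Int.ceil_le, div_le_iff₀ (by positivity),
    div_le_div_iff₀ (by positivity) (by positivity)]
  push_cast
  constructor <;> intro h <;> linarith

lemma le_maxPrev_iff {i : ℕ} (hi : 0 < i) {x y : ℤ} :
    x ≤ maxPrev (i + 1) y ↔ (x : ℚ) / i ≤ y / (i + 1 : ℕ) := by
  rw [maxPrev, le_sub_comm, Int.ceil_le, div_le_iff₀ (by positivity),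
    div_le_div_iff₀ (by positivity) (by positivity)]
  push_cast
  constructor <;> intro h <;> linarith

lemma minNext_le_iff_le_maxPrev {i : ℕ} (hi : 0 < i) {x y : ℤ} :
    minNext i x ≤ y ↔ x ≤ maxPrev (i + 1) y :=
  (minNext_le_iff hi).trans (le_maxPrev_iff hi).symm

/-! ### Lecture hall sequences -/

/-- The lecture hall condition on `(λ₁, …, λₙ)`, where `λᵢ₊₁` is `l i`. -/
def IsLectureHallPartition {n : ℕ} (l : Fin n → ℕ) : Prop :=
  ∀ i j : Fin n, i ≤ j → (l i : ℚ) / ((i : ℕ) + 1) ≤ (l j : ℚ) / ((j : ℕ) + 1)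

/-- A lecture hall partition `(a 1, …, a n)`, extended by zero to all positions. Since `0 / 0 = 0`,
the inequality at `i = 0` says `0 ≤ a 1`, so that all entries are nonnegative. -/
structure IsLectureHallSeq (n : ℕ) (a : ℕ → ℤ) : Prop where
  zero : a 0 = 0
  ratio_le_succ : ∀ i < n, (a i : ℚ) / i ≤ a (i + 1) / (i + 1 : ℕ)
  eq_zero_of_lt : ∀ i, n < i → a i = 0

namespace IsLectureHallSeq

variable {n : ℕ} {a : ℕ → ℤ}

lemma ratio_mono (h : IsLectureHallSeq n a) {i j : ℕ} (hij : i ≤ j) (hj : j ≤ n) :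
    (a i : ℚ) / i ≤ a j / j := by
  induction j, hij using Nat.le_induction with
  | base => exact le_rfl
  | succ j _ ih => exact (ih (by lia)).trans (h.ratio_le_succ j hj)

lemma nonneg (h : IsLectureHallSeq n a) (i : ℕ) : 0 ≤ a i := by
  rcases i.eq_zero_or_pos with rfl | hi
  · exact h.zero.ge
  rcases lt_or_ge n i with hn | hn
  · exact (h.eq_zero_of_lt i hn).ge
  · have ratio_nonneg : 0 ≤ (a i : ℚ) / i := by simpa using h.ratio_mono i.zero_le hn
    rw [le_div_iff₀ (by positivity), zero_mul] at ratio_nonneg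
    exact_mod_cast ratio_nonneg

lemma minNext_le (h : IsLectureHallSeq n a) {i : ℕ} (hi : i < n) :
    minNext i (a i) ≤ a (i + 1) := by
  rcases i.eq_zero_or_pos with rfl | hpos
  · simpa only [h.zero, minNext_zero_right] using h.nonneg 1
  · exact (minNext_le_iff hpos).2 (h.ratio_le_succ i hi)

lemma le_maxPrev (h : IsLectureHallSeq n a) {i : ℕ} (hpos : 0 < i) (hi : i < n) :
    a i ≤ maxPrev (i + 1) (a (i + 1)) :=
  (le_maxPrev_iff hpos).2 (h.ratio_le_succ i hi)

lemma of_minNext_le (zero : a 0 = 0) (minNext_le : ∀ i < n, minNext i (a i) ≤ a (i + 1))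
    (eq_zero_of_lt : ∀ i, n < i → a i = 0) : IsLectureHallSeq n a where
  zero := zero
  ratio_le_succ i hi := by
    rcases i.eq_zero_or_pos with rfl | hpos
    · have : 0 ≤ a 1 := by simpa only [zero, minNext_zero_right] using minNext_le 0 hi
      simpa using this
    · exact (minNext_le_iff hpos).1 (minNext_le i hi)
  eq_zero_of_lt := eq_zero_of_lt

end IsLectureHallSeq

/-- The integer sequence `0, l 0, l 1, …, l (n - 1), 0, 0, …`. -/
def toSeq {n : ℕ} (l : Fin n → ℕ) : ℕ → ℤ
  | 0 => 0
  | i + 1 => if h : i < n then l ⟨i, h⟩ else 0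

lemma toSeq_succ {n : ℕ} (l : Fin n → ℕ) (i : Fin n) : toSeq l (i + 1) = l i := by
  simp [toSeq]

lemma sum_toSeq {n : ℕ} (l : Fin n → ℕ) :
    ∑ i ∈ range (n + 1), toSeq l i = ((∑ i, l i : ℕ) : ℤ) := by
  simp [sum_range_succ', sum_range, toSeq]

lemma IsLectureHallPartition.isLectureHallSeq_toSeq {n : ℕ} {l : Fin n → ℕ}
    (h : IsLectureHallPartition l) :
    IsLectureHallSeq n (toSeq l) where
  zero := rfl
  ratio_le_succ
    | 0, hn => by simp [toSeq, hn]
    | i + 1, hi => by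
      have := h ⟨i, by lia⟩ ⟨i + 1, hi⟩ (by simp)
      simpa [toSeq, hi, Nat.lt_of_succ_lt hi] using this
  eq_zero_of_lt
    | i + 1, hi => by simp [toSeq, Nat.le_of_lt_succ hi]

lemma IsLectureHallSeq.isLectureHallPartition {n : ℕ} {a : ℕ → ℤ} (h : IsLectureHallSeq n a) :
    IsLectureHallPartition fun i : Fin n => (a (i + 1)).toNat := by
  intro i j hij
  have cast_toNat (i : ℕ) : ((a i).toNat : ℚ) = a i := by
    exact_mod_cast Int.toNat_of_nonneg (h.nonneg i)
  simpa [cast_toNat] using h.ratio_mono (Nat.succ_le_succ hij) j.2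

/-- Lecture hall partitions as lecture hall sequences. -/
def seqEquiv (n : ℕ) :
    {l : Fin n → ℕ // IsLectureHallPartition l} ≃ {a : ℕ → ℤ // IsLectureHallSeq n a} where
  toFun l := ⟨toSeq l.1, l.2.isLectureHallSeq_toSeq⟩
  invFun a := ⟨fun i => (a.1 (i + 1)).toNat, a.2.isLectureHallPartition⟩
  left_inv l := by
    ext i
    simp [toSeq_succ]
  right_inv a := by
    ext (_ | i)
    · exact a.2.zero.symm
    · by_cases hi : i < n
      · simpa [toSeq, hi] using a.2.nonneg (i + 1)
      · simpa [toSeq, hi] using (a.2.eq_zero_of_lt (i + 1) (by lia)).symm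

/-! ### Reflection -/

/-- Reflects each `a i` with `i ≢ n` modulo `2` in the interval
`[minNext (i - 1) (a (i - 1)), maxPrev (i + 1) (a (i + 1))]` of its admissible values, keeps the
other entries, and puts zeros at position `0` and beyond position `n`. -/
def reflect (n : ℕ) (a : ℕ → ℤ) : ℕ → ℤ
  | 0 => 0
  | i + 1 =>
    if n ≤ i then 0
    else if (i + 1) % 2 = n % 2 then a (i + 1)
    else minNext i (a i) + maxPrev (i + 2) (a (i + 2)) - a (i + 1)

section Reflect

variable {n : ℕ} {a b : ℕ → ℤ} {i : ℕ}

lemma reflect_of_lt (hi : n < i) : reflect n a i = 0 := by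
  cases i with
  | zero => rfl
  | succ i => simp [reflect, Nat.le_of_lt_succ hi]

lemma reflect_of_parity_eq (ha : a 0 = 0) (hi : i ≤ n) (hpar : i % 2 = n % 2) :
    reflect n a i = a i := by
  cases i with
  | zero => exact ha.symm
  | succ i => simp [reflect, Nat.not_le.2 hi, hpar]

lemma reflect_succ_of_parity_ne (hi : i < n) (hpar : (i + 1) % 2 ≠ n % 2) :
    reflect n a (i + 1) = minNext i (a i) + maxPrev (i + 2) (a (i + 2)) - a (i + 1) := by
  simp [reflect, Nat.not_le.2 hi, hpar]

lemma reflect_congr (h : ∀ i ≤ n, a i = b i) : reflect n a = reflect n b := by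
  ext (_ | i)
  · rfl
  rcases le_or_gt n i with hi | hi
  · rw [reflect_of_lt (by lia), reflect_of_lt (by lia)]
  by_cases hpar : (i + 1) % 2 = n % 2
  · simp only [reflect, hpar, if_true, h (i + 1) hi]
  · rw [reflect_succ_of_parity_ne hi hpar, reflect_succ_of_parity_ne hi hpar,
      h i (by lia), h (i + 1) hi, h (i + 2) (by lia)]

lemma reflect_reflect (ha : a 0 = 0) (hi : i ≤ n) : reflect n (reflect n a) i = a i := by
  by_cases hpar : i % 2 = n % 2
  · rw [reflect_of_parity_eq (by rfl) hi hpar, reflect_of_parity_eq ha hi hpar]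
  · cases i with
    | zero => exact ha.symm
    | succ i =>
      rw [reflect_succ_of_parity_ne hi hpar, reflect_succ_of_parity_ne hi hpar,
        reflect_of_parity_eq ha (by lia) (by lia), reflect_of_parity_eq ha (by lia) (by lia)]
      ring

lemma IsLectureHallSeq.isLectureHallSeq_reflect {N : ℕ} (h : IsLectureHallSeq N a) (hnN : n ≤ N) :
    IsLectureHallSeq n (reflect n a) := by
  refine .of_minNext_le (by rfl) (fun i hi => ?_) fun i hi => reflect_of_lt hi
  by_cases hpar : i % 2 = n % 2
  · rw [reflect_of_parity_eq h.zero hi.le hpar, reflect_succ_of_parity_ne hi (by lia)]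
    have := h.le_maxPrev i.succ_pos (by lia)
    linarith
  · rw [reflect_of_parity_eq h.zero hi (by lia)]
    cases i with
    | zero => exact (minNext_zero_right 0).trans_le (h.nonneg 1)
    | succ i =>
      rw [minNext_le_iff_le_maxPrev i.succ_pos, reflect_succ_of_parity_ne (by lia) hpar]
      have := h.minNext_le (i := i) (by lia)
      linarith

/-- The sequence of length `n + 1` obtained by reflecting `a` and appending a part that exceeds its
least admissible value by `k`. -/
def extend (n k : ℕ) (a : ℕ → ℤ) : ℕ → ℤ :=
  Function.update (reflect n a) (n + 1) (minNext n (a n) + k)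

lemma extend_last (n k : ℕ) (a : ℕ → ℤ) : extend n k a (n + 1) = minNext n (a n) + k :=
  Function.update_self ..

lemma extend_of_ne (k : ℕ) (hi : i ≠ n + 1) : extend n k a i = reflect n a i :=
  Function.update_of_ne hi ..

lemma minNext_extend (k : ℕ) (ha : a 0 = 0) :
    minNext n (extend n k a n) = minNext n (a n) := by
  rw [extend_of_ne k (by lia), reflect_of_parity_eq ha le_rfl rfl]

lemma IsLectureHallSeq.isLectureHallSeq_extend (h : IsLectureHallSeq n a) (k : ℕ) :
    IsLectureHallSeq (n + 1) (extend n k a) := by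
  have hreflect := h.isLectureHallSeq_reflect le_rfl
  refine .of_minNext_le ?_ (fun i hi => ?_) fun i hi => ?_
  · rw [extend_of_ne k (by lia), hreflect.zero]
  · rcases Nat.lt_succ_iff_lt_or_eq.1 hi with hi | rfl
    · rw [extend_of_ne k (by lia), extend_of_ne k (by lia)]
      exact hreflect.minNext_le hi
    · rw [minNext_extend k h.zero, extend_last]
      lia
  · rw [extend_of_ne k (by lia), reflect_of_lt (by lia)]

/-- Every lecture hall sequence of length `n + 1` arises from exactly one of length `n` by
reflecting it and appending a part. -/
def extendEquiv (n : ℕ) :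
    ℕ × {a : ℕ → ℤ // IsLectureHallSeq n a} ≃ {a : ℕ → ℤ // IsLectureHallSeq (n + 1) a} where
  toFun p := ⟨extend n p.1 p.2.1, p.2.2.isLectureHallSeq_extend p.1⟩
  invFun b := ((b.1 (n + 1) - minNext n (b.1 n)).toNat,
    ⟨reflect n b.1, b.2.isLectureHallSeq_reflect n.le_succ⟩)
  left_inv := by
    rintro ⟨k, a, ha⟩
    refine Prod.ext ?_ (Subtype.ext (funext fun i => ?_))
    · simp only [minNext_extend k ha.zero, extend_last, add_sub_cancel_left, Int.toNat_natCast]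
    · change reflect n (extend n k a) i = a i
      rw [reflect_congr fun i hi => extend_of_ne k (by lia)]
      rcases le_or_gt i n with hi | hi
      · exact reflect_reflect ha.zero hi
      · rw [reflect_of_lt hi, ha.eq_zero_of_lt i hi]
  right_inv := by
    rintro ⟨b, hb⟩
    refine Subtype.ext (funext fun i => ?_)
    change extend n (b (n + 1) - minNext n (b n)).toNat (reflect n b) i = b i
    rcases lt_trichotomy i (n + 1) with hi | rfl | hi
    · rw [extend_of_ne _ hi.ne, reflect_reflect hb.zero (by lia)]
    · have := hb.minNext_le n.lt_succ_self
      rw [extend_last, reflect_of_parity_eq hb.zero le_rfl rfl]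
      lia
    · rw [extend_of_ne _ hi.ne', reflect_of_lt (by lia), hb.eq_zero_of_lt i hi]

end Reflect

/-! ### Half weights -/

/-- The half weight `a (m - 1) + a (m - 3) + ⋯`. -/
def halfWeight (a : ℕ → ℤ) : ℕ → ℤ
  | 0 => 0
  | 1 => a 0
  | m + 2 => a (m + 1) + halfWeight a m

section HalfWeight

variable {n : ℕ} {a b : ℕ → ℤ}

lemma halfWeight_succ_add_halfWeight (a : ℕ → ℤ) (n : ℕ) :
    halfWeight a (n + 1) + halfWeight a n = ∑ i ∈ range (n + 1), a i := by
  induction n with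
  | zero => simp [halfWeight]
  | succ n ih =>
    rw [sum_range_succ, ← ih, halfWeight]
    ring

lemma halfWeight_congr :
    ∀ {m : ℕ}, (∀ i < m, i % 2 ≠ m % 2 → a i = b i) → halfWeight a m = halfWeight b m
  | 0, _ => rfl
  | 1, h => h 0 (by lia) (by lia)
  | m + 2, h => by
    rw [halfWeight, halfWeight, h (m + 1) (by lia) (by lia),
      halfWeight_congr fun i hi hpar => h i (by lia) (by lia)]

lemma halfWeight_reflect_add (ha : a 0 = 0) :
    ∀ {m : ℕ}, m ≤ n → m % 2 = n % 2 →
      halfWeight (reflect n a) m + halfWeight a m + minNext m (a m) = 2 * halfWeight a (m + 1)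
  | 0, _, _ => by simp [halfWeight, ha, minNext_zero_right]
  | 1, _, _ => by simp [halfWeight, ha, reflect, minNext_one_left]
  | m + 2, hm, hpar => by
    have ih := halfWeight_reflect_add ha (m := m) (by lia) (by lia)
    have hends := maxPrev_add_minNext (m + 2) (a (m + 2))
    simp only [halfWeight, reflect_succ_of_parity_ne (a := a) (show m < n by lia) (by lia)]
    linarith

lemma halfWeight_extend_succ (k : ℕ) (ha : a 0 = 0) :
    halfWeight (extend n k a) (n + 1) = halfWeight a (n + 1) :=
  halfWeight_congr fun i hi hpar => by
    rw [extend_of_ne k hi.ne, reflect_of_parity_eq ha (by lia) (by lia)]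

lemma halfWeight_extend_add_two (k : ℕ) (ha : a 0 = 0) :
    halfWeight (extend n k a) (n + 2) = 2 * halfWeight a (n + 1) - halfWeight a n + k := by
  have hreflect : halfWeight (extend n k a) n = halfWeight (reflect n a) n :=
    halfWeight_congr fun i hi _ => extend_of_ne k (by lia)
  have := halfWeight_reflect_add ha (n := n) le_rfl rfl
  rw [halfWeight, extend_last, hreflect]
  linarith

end HalfWeight

/-! ### The bijection -/

lemma isLectureHallSeq_zero_iff {a : ℕ → ℤ} : IsLectureHallSeq 0 a ↔ a = 0 := by
  refine ⟨fun h => funext fun i => ?_, ?_⟩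
  · rcases i.eq_zero_or_pos with rfl | hi
    · exact h.zero
    · exact h.eq_zero_of_lt i hi
  · rintro rfl
    exact ⟨rfl, by simp, fun _ _ => rfl⟩

/-- The numbers by which the appended parts exceed their least admissible values when a lecture hall
sequence is built by successive extensions; the `i`-th one belongs to the extension made `i` steps
before the last. -/
def excessEquiv : ∀ n : ℕ, {a : ℕ → ℤ // IsLectureHallSeq n a} ≃ (Fin n → ℕ)
  | 0 =>
    { toFun := fun _ => Fin.elim0
      invFun := fun _ => ⟨0, isLectureHallSeq_zero_iff.2 rfl⟩
      left_inv := fun a => Subtype.ext (isLectureHallSeq_zero_iff.1 a.2).symm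
      right_inv := fun _ => Subsingleton.elim _ _ }
  | n + 1 =>
    (extendEquiv n).symm.trans
      ((Equiv.prodCongr (.refl ℕ) (excessEquiv n)).trans (Fin.consEquiv fun _ => ℕ))

lemma excessEquiv_extendEquiv (n k : ℕ) (a : {a : ℕ → ℤ // IsLectureHallSeq n a}) :
    excessEquiv (n + 1) (extendEquiv n (k, a)) = Fin.cons k (excessEquiv n a) := by
  simp [excessEquiv, Fin.consEquiv]

theorem halfWeight_eq_sum_excess {n : ℕ} (a : {a : ℕ → ℤ // IsLectureHallSeq n a}) :
    halfWeight a.1 (n + 1) = ∑ i : Fin n, ((i : ℤ) + 1) * excessEquiv n a i ∧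
      halfWeight a.1 n = ∑ i : Fin n, (i : ℤ) * excessEquiv n a i := by
  induction n with
  | zero => simp [halfWeight, a.2.zero]
  | succ n ih =>
    obtain ⟨⟨k, a⟩, rfl⟩ := (extendEquiv n).surjective a
    have hextend : (extendEquiv n (k, a)).1 = extend n k a.1 := rfl
    obtain ⟨hu, hv⟩ := ih a
    rw [hextend, halfWeight_extend_add_two k a.2.zero, halfWeight_extend_succ k a.2.zero, hu, hv,
      excessEquiv_extendEquiv]
    simp only [Fin.sum_univ_succ, Fin.cons_zero, Fin.cons_succ]
    constructor
    · rw [mul_sum, ← sum_sub_distrib, add_comm]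
      congr 1
      · simp
      · refine sum_congr rfl fun i _ => ?_
        push_cast [Fin.val_succ]
        ring
    · simp

theorem sum_eq_sum_excess {n : ℕ} (l : {l : Fin n → ℕ // IsLectureHallPartition l}) :
    ∑ i, l.1 i = ∑ i : Fin n, excessEquiv n (seqEquiv n l) i * (2 * (i : ℕ) + 1) := by
  obtain ⟨hu, hv⟩ := halfWeight_eq_sum_excess (seqEquiv n l)
  zify
  calc (∑ i, (l.1 i : ℤ)) = ∑ i ∈ range (n + 1), toSeq l.1 i := by rw [sum_toSeq, Nat.cast_sum]
    _ = halfWeight (toSeq l.1) (n + 1) + halfWeight (toSeq l.1) n :=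
      (halfWeight_succ_add_halfWeight _ n).symm
    _ = ∑ i : Fin n, (((i : ℤ) + 1) * excessEquiv n (seqEquiv n l) i
          + (i : ℤ) * excessEquiv n (seqEquiv n l) i) := by
      rw [sum_add_distrib, ← hu, ← hv]
      rfl
    _ = ∑ i : Fin n, (excessEquiv n (seqEquiv n l) i : ℤ) * (2 * (i : ℤ) + 1) :=
      sum_congr rfl fun i _ => by ring

/-! ### Partitions with prescribed parts -/

section Multiplicities

variable {ι α : Type*} [Fintype ι]

/-- The multiset in which each `i` contributes `c i` copies of `f i`. -/
def ofMultiplicities (f : ι → α) (c : ι → ℕ) : Multiset α :=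
  ∑ i, Multiset.replicate (c i) (f i)

lemma mem_range_of_mem_ofMultiplicities {f : ι → α} {c : ι → ℕ} {x : α}
    (hx : x ∈ ofMultiplicities f c) : x ∈ Set.range f := by
  obtain ⟨i, -, hi⟩ := Multiset.mem_sum.1 hx
  exact ⟨i, (Multiset.eq_of_mem_replicate hi).symm⟩

lemma sum_ofMultiplicities [AddCommMonoid α] (f : ι → α) (c : ι → ℕ) :
    (ofMultiplicities f c).sum = ∑ i, c i • f i := by
  simp [ofMultiplicities, Multiset.sum_sum]

lemma count_ofMultiplicities [DecidableEq α] {f : ι → α} (hf : f.Injective) (c : ι → ℕ) (i : ι) :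
    (ofMultiplicities f c).count (f i) = c i := by
  classical
  simp [ofMultiplicities, Multiset.count_sum', Multiset.count_replicate, hf.eq_iff]

lemma ofMultiplicities_count [DecidableEq α] {f : ι → α} (hf : f.Injective) {s : Multiset α}
    (hs : ∀ x ∈ s, x ∈ Set.range f) : ofMultiplicities f (fun i => s.count (f i)) = s := by
  ext x
  by_cases hx : x ∈ Set.range f
  · obtain ⟨i, rfl⟩ := hx
    exact count_ofMultiplicities hf _ i
  · rw [Multiset.count_eq_zero_of_notMem (mt mem_range_of_mem_ofMultiplicities hx),
      Multiset.count_eq_zero_of_notMem (mt (hs x) hx)]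

/-- A partition whose parts are among the numbers `f i` is given by the multiplicities of these. -/
def multiplicitiesEquivPartition {f : ι → ℕ} (hf : f.Injective) (hpos : ∀ i, 0 < f i) (m : ℕ) :
    {c : ι → ℕ // ∑ i, c i * f i = m} ≃
      {p : Nat.Partition m // ∀ x ∈ p.parts, x ∈ Set.range f} where
  toFun c :=
    ⟨{ parts := ofMultiplicities f c.1
       parts_pos := fun hx => by
         obtain ⟨i, rfl⟩ := mem_range_of_mem_ofMultiplicities hx
         exact hpos i
       parts_sum := (sum_ofMultiplicities f c.1).trans c.2 },
      fun _ => mem_range_of_mem_ofMultiplicities⟩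
  invFun p := ⟨fun i => p.1.parts.count (f i),
    (sum_ofMultiplicities f _).symm.trans
      ((congrArg Multiset.sum (ofMultiplicities_count hf p.2)).trans p.1.parts_sum)⟩
  left_inv c := Subtype.ext (funext (count_ofMultiplicities hf c.1))
  right_inv p := Subtype.ext (Nat.Partition.ext (ofMultiplicities_count hf p.2))

end Multiplicities

/-- The part `2 i + 1`, for `i < n`. -/
def oddPart {n : ℕ} (i : Fin n) : ℕ := 2 * i + 1

lemma oddPart_injective (n : ℕ) : (@oddPart n).Injective := fun i j hij => by
  simpa [oddPart, Fin.val_inj] using hij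

lemma mem_range_oddPart {n x : ℕ} :
    x ∈ Set.range (@oddPart n) ↔ Odd x ∧ x ≤ 2 * n - 1 := by
  constructor
  · rintro ⟨i, rfl⟩
    exact ⟨⟨i, rfl⟩, by rw [oddPart]; lia⟩
  · rintro ⟨⟨i, rfl⟩, hi⟩
    exact ⟨⟨i, by lia⟩, rfl⟩

end LectureHall

open LectureHall

/-- Lecture Hall Theorem: For every `n ≥ 1` and `m ≥ 0`, the number
of lecture hall partitions `λ = (λ₁, …, λₙ)` with `λ₁ + ⋯ + λₙ = m` equals the
number of partitions of `m` into odd parts each at most `2n - 1`. -/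
theorem lecture_hall_theorem (n m : ℕ) (hn : 1 ≤ n) :
    Nat.card {l : Fin n → ℕ //
        (∀ i j : Fin n, i ≤ j → (l i : ℚ) / ((i : ℕ) + 1) ≤ (l j : ℚ) / ((j : ℕ) + 1)) ∧
        ∑ i, l i = m} =
    Nat.card {p : Nat.Partition m // ∀ x ∈ p.parts, Odd x ∧ x ≤ 2 * n - 1} := by
  calc
    _ = Nat.card {l : {l : Fin n → ℕ // IsLectureHallPartition l} // ∑ i, l.1 i = m} :=
      Nat.card_congr <|
        (Equiv.subtypeSubtypeEquivSubtypeInter _ fun l : Fin n → ℕ => ∑ i, l i = m).symm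
    _ = Nat.card {c : Fin n → ℕ // ∑ i, c i * oddPart i = m} :=
      Nat.card_congr <| ((seqEquiv n).trans (excessEquiv n)).subtypeEquiv fun l => by
        rw [sum_eq_sum_excess l]
        rfl
    _ = Nat.card {p : Nat.Partition m // ∀ x ∈ p.parts, x ∈ Set.range (@oddPart n)} :=
      Nat.card_congr <|
        multiplicitiesEquivPartition (oddPart_injective n) (fun _ => Nat.succ_pos _) m
    _ = _ := by simp only [mem_range_oddPart]
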